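/- For all x, y ∈ E: (1/m)·∑_{i=1}^m (1/(m·q_i))·‖∇f_i(x) − ∇f_i(y)‖² ≤ 2·L_Q·[f(x) − f(y) − ⟪∇f(y), x − y⟫]. -/

import Mathlib

/-!
Each `f i` is cocoercive in Bregman form,
`‖∇fᵢ(x) - ∇fᵢ(y)‖² ≤ 2 Lᵢ (fᵢ(x) - fᵢ(y) - ⟪∇fᵢ(y), x - y⟫)` (`sq_norm_grad_sub_le`): compare the
tangent lower bound at `y` (`tangent_le`) with the quadratic upper bound at `x` (`descent`) at the
gradient step `z = x - Lᵢ⁻¹ (∇fᵢ(x) - ∇fᵢ(y))`. Dividing by `m qᵢ`, bounding `Lᵢ / (m qᵢ)` by the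
maximum `LQ` (legitimate since Bregman gaps of convex functions are nonnegative), and averaging over
`i` gives the claim, because the Bregman gap is linear in the function.
-/

open RealInnerProductSpace Finset

theorem hasDerivAt_line {E : Type*} [NormedAddCommGroup E] [InnerProductSpace ℝ E]
    [CompleteSpace E] {f : E → ℝ} {g : E → E} (hd : ∀ x, HasGradientAt f (g x) x)
    (x v : E) (t : ℝ) :
    HasDerivAt (fun t : ℝ => f (x + t • v)) ⟪g (x + t • v), v⟫ t := by
  have h1 : HasDerivAt (fun t : ℝ => x + t • v) v t := by
    simpa using ((hasDerivAt_id t).smul_const v).const_add x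
  have h2 := (hd (x + t • v)).hasFDerivAt.comp_hasDerivAt t h1
  rw [InnerProductSpace.toDual_apply_apply] at h2
  exact h2

/-- First-order characterization of convexity: the graph lies above its tangents. -/
theorem tangent_le {E : Type*} [NormedAddCommGroup E] [InnerProductSpace ℝ E]
    [CompleteSpace E] {f : E → ℝ} {g : E → E} (hc : ConvexOn ℝ Set.univ f)
    (hd : ∀ x, HasGradientAt f (g x) x) (x y : E) :
    f y + ⟪g y, x - y⟫ ≤ f x := by
  have hline : ConvexOn ℝ Set.univ (fun t : ℝ => f (y + t • (x - y))) := by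
    refine ⟨convex_univ, fun a _ b _ s t hs ht hst => ?_⟩
    have h := hc.2 (Set.mem_univ (y + a • (x - y))) (Set.mem_univ (y + b • (x - y))) hs ht hst
    have e : y + (s • a + t • b) • (x - y)
        = s • (y + a • (x - y)) + t • (y + b • (x - y)) := by
      obtain rfl : t = 1 - s := by linarith
      simp only [smul_eq_mul]
      module
    simpa only [e] using h
  have h := hline.le_slope_of_hasDerivAt (Set.mem_univ 0) (Set.mem_univ 1) one_pos
    (hasDerivAt_line hd y (x - y) 0)
  simp [slope_def_field] at h
  linarith

/-- Descent lemma: a Lipschitz gradient gives a quadratic upper bound. -/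
theorem descent {E : Type*} [NormedAddCommGroup E] [InnerProductSpace ℝ E]
    [CompleteSpace E] {f : E → ℝ} {g : E → E} {L : ℝ}
    (hd : ∀ x, HasGradientAt f (g x) x) (hl : ∀ x y, ‖g x - g y‖ ≤ L * ‖x - y‖) (x v : E) :
    f (x + v) ≤ f x + ⟪g x, v⟫ + L / 2 * ‖v‖ ^ 2 := by
  -- The gap between the two sides along the segment is antitone in `t`.
  have hder : ∀ t : ℝ, HasDerivAt
      (fun t : ℝ => f (x + t • v) - (t * ⟪g x, v⟫ + t ^ 2 * (L / 2 * ‖v‖ ^ 2)))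
      (⟪g (x + t • v), v⟫ - (⟪g x, v⟫ + 2 * t * (L / 2 * ‖v‖ ^ 2))) t := by
    intro t
    refine (hasDerivAt_line hd x v t).sub (HasDerivAt.add ?_ ?_)
    · simpa using (hasDerivAt_id t).mul_const ⟪g x, v⟫
    · simpa using (hasDerivAt_pow 2 t).mul_const (L / 2 * ‖v‖ ^ 2)
  have hanti : AntitoneOn
      (fun t : ℝ => f (x + t • v) - (t * ⟪g x, v⟫ + t ^ 2 * (L / 2 * ‖v‖ ^ 2)))
      (Set.Icc 0 1) := by
    refine antitoneOn_of_hasDerivWithinAt_nonpos (convex_Icc 0 1)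
      (fun t _ => (hder t).continuousAt.continuousWithinAt)
      (fun t _ => (hder t).hasDerivWithinAt) fun t ht => ?_
    rw [interior_Icc] at ht
    have h1 : ⟪g (x + t • v) - g x, v⟫ ≤ ‖g (x + t • v) - g x‖ * ‖v‖ := real_inner_le_norm _ _
    have h2 : ‖g (x + t • v) - g x‖ ≤ L * (t * ‖v‖) := by
      simpa [norm_smul, abs_of_pos ht.1] using hl (x + t • v) x
    have h3 := mul_le_mul_of_nonneg_right h2 (norm_nonneg v)
    rw [inner_sub_left] at h1
    nlinarith
  have h := hanti (Set.left_mem_Icc.2 zero_le_one) (Set.right_mem_Icc.2 zero_le_one) zero_le_one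
  simp at h
  linarith

/-- Cocoercivity in Bregman form for a convex function with `L`-Lipschitz gradient. -/
theorem sq_norm_grad_sub_le {E : Type*} [NormedAddCommGroup E] [InnerProductSpace ℝ E]
    [CompleteSpace E] {f : E → ℝ} {g : E → E} {L : ℝ} (hL : 0 < L)
    (hc : ConvexOn ℝ Set.univ f) (hd : ∀ x, HasGradientAt f (g x) x)
    (hl : ∀ x y, ‖g x - g y‖ ≤ L * ‖x - y‖) (x y : E) :
    ‖g x - g y‖ ^ 2 ≤ 2 * L * (f x - f y - ⟪g y, x - y⟫) := by
  -- The gradient step minimizes the quadratic upper bound of `f - ⟪g y, ·⟫` at `x`.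
  set v : E := -(L⁻¹ • (g x - g y)) with hv
  have h1 := tangent_le hc hd (x + v) y
  have h2 := descent hd hl x v
  have e1 : ⟪g y, x + v - y⟫ = ⟪g y, x - y⟫ + ⟪g y, v⟫ := by
    rw [← inner_add_right]; congr 1; abel
  have e2 : ⟪g x, v⟫ - ⟪g y, v⟫ = -(L⁻¹ * ‖g x - g y‖ ^ 2) := by
    rw [← inner_sub_left, hv, inner_neg_right, real_inner_smul_right, real_inner_self_eq_norm_sq]
  have e3 : ‖v‖ ^ 2 = L⁻¹ ^ 2 * ‖g x - g y‖ ^ 2 := by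
    rw [hv, norm_neg, norm_smul, mul_pow, Real.norm_eq_abs, sq_abs]
  have e4 : L / 2 * ‖v‖ ^ 2 = L⁻¹ * ‖g x - g y‖ ^ 2 / 2 := by
    rw [e3]; field_simp
  have h3 : L⁻¹ * ‖g x - g y‖ ^ 2 ≤ 2 * (f x - f y - ⟪g y, x - y⟫) := by linarith
  calc ‖g x - g y‖ ^ 2 = L * (L⁻¹ * ‖g x - g y‖ ^ 2) := by field_simp
    _ ≤ L * (2 * (f x - f y - ⟪g y, x - y⟫)) := mul_le_mul_of_nonneg_left h3 hL.le
    _ = _ := by ring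

/-- Weighted sum of squared gradient differences bounded by the Bregman gap of the
average function `F`, with constant `2·L_Q`. -/
theorem stmt1 {E : Type*} [NormedAddCommGroup E] [InnerProductSpace ℝ E] [CompleteSpace E]
    (m : ℕ) (hm : 0 < m)
    (f : Fin m → E → ℝ) (f' : Fin m → E → E) (Li : Fin m → ℝ) (q : Fin m → ℝ)
    (hLipos : ∀ i, 0 < Li i)
    (hconv : ∀ i, ConvexOn ℝ Set.univ (f i))
    (hdiff : ∀ i x, HasGradientAt (f i) (f' i x) x)
    (hlip : ∀ i x y, ‖f' i x - f' i y‖ ≤ Li i * ‖x - y‖)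
    (hq : ∀ i, 0 < q i) (hqsum : ∑ i, q i = 1)
    (F : E → ℝ) (F' : E → E)
    (hF : ∀ x, F x = (1 / (m : ℝ)) * ∑ i, f i x)
    (hF' : ∀ x, F' x = (1 / (m : ℝ)) • ∑ i, f' i x)
    (LQ : ℝ)
    (hLQ : LQ = (1 / (m : ℝ)) *
      Finset.univ.sup' ⟨⟨0, hm⟩, Finset.mem_univ _⟩ (fun i => Li i / q i))
    (x y : E) :
    (1 / (m : ℝ)) * ∑ i, (1 / ((m : ℝ) * q i)) * ‖f' i x - f' i y‖ ^ 2
      ≤ 2 * LQ * (F x - F y - ⟪F' y, x - y⟫) := by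
  have hm' : (0 : ℝ) < m := by exact_mod_cast hm
  have hterm : ∀ i, (1 / ((m : ℝ) * q i)) * ‖f' i x - f' i y‖ ^ 2
      ≤ 2 * LQ * (f i x - f i y - ⟪f' i y, x - y⟫) := by
    intro i
    have hqi := hq i
    have hB : 0 ≤ f i x - f i y - ⟪f' i y, x - y⟫ := by
      linarith [tangent_le (hconv i) (hdiff i) x y]
    have hmax : (1 / (m : ℝ)) * (Li i / q i) ≤ LQ := by
      rw [hLQ]
      exact mul_le_mul_of_nonneg_left
        (Finset.le_sup' (fun i => Li i / q i) (Finset.mem_univ i)) (by positivity)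
    calc (1 / ((m : ℝ) * q i)) * ‖f' i x - f' i y‖ ^ 2
        ≤ (1 / ((m : ℝ) * q i)) * (2 * Li i * (f i x - f i y - ⟪f' i y, x - y⟫)) :=
          mul_le_mul_of_nonneg_left
            (sq_norm_grad_sub_le (hLipos i) (hconv i) (hdiff i) (hlip i) x y) (by positivity)
      _ = 2 * ((1 / (m : ℝ)) * (Li i / q i)) * (f i x - f i y - ⟪f' i y, x - y⟫) := by
          field_simp
      _ ≤ _ := by gcongr
  have hgap : F x - F y - ⟪F' y, x - y⟫
      = (1 / (m : ℝ)) * ∑ i, (f i x - f i y - ⟪f' i y, x - y⟫) := by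
    rw [hF, hF, hF', real_inner_smul_left, sum_inner, Finset.sum_sub_distrib,
      Finset.sum_sub_distrib]
    ring
  calc (1 / (m : ℝ)) * ∑ i, (1 / ((m : ℝ) * q i)) * ‖f' i x - f' i y‖ ^ 2
      ≤ (1 / (m : ℝ)) * ∑ i, 2 * LQ * (f i x - f i y - ⟪f' i y, x - y⟫) :=
        mul_le_mul_of_nonneg_left (Finset.sum_le_sum fun i _ => hterm i) (by positivity)
    _ = _ := by rw [hgap, ← Finset.mul_sum]; ring
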